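/- There is a short exact sequence of graded left A(1)-modules 0 → Σ² A(1)/(Sq²) → A(1)/(Sq¹) → F₂ → 0, where F₂ is the trivial module concentrated in degree 0, the surjection sends the generator to 1, and the injection sends the generator of Σ² A(1)/(Sq²) to the class of Sq². -/

import Mathlib

noncomputable section

/-- Relations defining A(1): (Sq¹)² = 0, Sq²Sq² = Sq¹Sq²Sq¹, Sq²Sq¹Sq²Sq¹ = Sq¹Sq²Sq¹Sq². -/
inductive A1Rel : FreeAlgebra (ZMod 2) (Fin 2) → FreeAlgebra (ZMod 2) (Fin 2) → Prop
  | sq1_sq1 : A1Rel (FreeAlgebra.ι (ZMod 2) (0 : Fin 2) * FreeAlgebra.ι (ZMod 2) 0) 0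
  | adem : A1Rel (FreeAlgebra.ι (ZMod 2) (1 : Fin 2) * FreeAlgebra.ι (ZMod 2) 1)
      (FreeAlgebra.ι (ZMod 2) (0 : Fin 2) * FreeAlgebra.ι (ZMod 2) 1 * FreeAlgebra.ι (ZMod 2) 0)
  | top : A1Rel
      (FreeAlgebra.ι (ZMod 2) (1 : Fin 2) * FreeAlgebra.ι (ZMod 2) 0 *
        FreeAlgebra.ι (ZMod 2) 1 * FreeAlgebra.ι (ZMod 2) 0)
      (FreeAlgebra.ι (ZMod 2) (0 : Fin 2) * FreeAlgebra.ι (ZMod 2) 1 *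
        FreeAlgebra.ι (ZMod 2) 0 * FreeAlgebra.ι (ZMod 2) 1)

/-- The algebra A(1), subalgebra of the mod-2 Steenrod algebra generated by Sq¹, Sq². -/
abbrev A1 := RingQuot A1Rel

def Sq1 : A1 := RingQuot.mkAlgHom (ZMod 2) A1Rel (FreeAlgebra.ι (ZMod 2) 0)
def Sq2 : A1 := RingQuot.mkAlgHom (ZMod 2) A1Rel (FreeAlgebra.ι (ZMod 2) 1)
def Sq3 : A1 := Sq1 * Sq2

/-- Generators, for building monomial words. -/
def A1gen : Fin 2 → A1
  | 0 => Sq1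
  | 1 => Sq2

/-- Weight of a word: Sq¹ has degree 1, Sq² has degree 2. -/
def A1wt (l : List (Fin 2)) : ℕ := (l.map fun i => (i : ℕ) + 1).sum

/-- The product of a word of generators. -/
def A1word (l : List (Fin 2)) : A1 := (l.map A1gen).prod

/-- The degree-`n` graded component of A(1): the F₂-span of monomials of weight `n`. -/
def A1deg (n : ℕ) : Submodule (ZMod 2) A1 :=
  Submodule.span (ZMod 2) {x | ∃ l, A1wt l = n ∧ x = A1word l}

/-- The degree-`n` component of a cyclic module A(1)/I. -/
def A1qdeg (I : Submodule A1 A1) (n : ℕ) : Submodule (ZMod 2) (A1 ⧸ I) :=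
  Submodule.map (I.mkQ.restrictScalars (ZMod 2)) (A1deg n)

theorem Sq1_mul_Sq1 : Sq1 * Sq1 = 0 := by
  simpa [Sq1] using RingQuot.mkAlgHom_rel (ZMod 2) A1Rel.sq1_sq1

theorem Sq2_mul_Sq2 : Sq2 * Sq2 = Sq1 * Sq2 * Sq1 := by
  simpa [Sq1, Sq2] using RingQuot.mkAlgHom_rel (ZMod 2) A1Rel.adem

/-- Induction principle for `A1`: it is generated as an algebra by `Sq1` and `Sq2`. -/
theorem A1_induction {p : A1 → Prop} (hc : ∀ c : ZMod 2, p (algebraMap (ZMod 2) A1 c))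
    (h1 : p Sq1) (h2 : p Sq2) (hmul : ∀ x y, p x → p y → p (x * y))
    (hadd : ∀ x y, p x → p y → p (x + y)) (x : A1) : p x := by
  obtain ⟨y, rfl⟩ := RingQuot.mkAlgHom_surjective (ZMod 2) A1Rel x
  induction y using FreeAlgebra.induction with
  | grade0 c => simpa only [AlgHom.commutes] using hc c
  | grade1 i =>
    fin_cases i
    · exact h1
    · exact h2
  | mul a b ha hb => simpa only [map_mul] using hmul _ _ ha hb
  | add a b ha hb => simpa only [map_add] using hadd _ _ ha hb

/-- A pair of elements satisfying the defining relations determines an algebra map out of `A1`. -/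
def A1lift {B : Type*} [Ring B] [Algebra (ZMod 2) B] (s t : B) (hs : s * s = 0)
    (hst : t * t = s * t * s) (htop : t * s * t * s = s * t * s * t) : A1 →ₐ[ZMod 2] B :=
  RingQuot.liftAlgHom (ZMod 2) ⟨FreeAlgebra.lift (ZMod 2) ![s, t], by
    rintro _ _ (_ | _ | _)
    · simpa using hs
    · simpa using hst
    · simpa using htop⟩

section Lift

variable {B : Type*} [Ring B] [Algebra (ZMod 2) B] (s t : B) (hs : s * s = 0)
  (hst : t * t = s * t * s) (htop : t * s * t * s = s * t * s * t)

@[simp] theorem A1lift_Sq1 : A1lift s t hs hst htop Sq1 = s := by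
  simp [A1lift, Sq1]

@[simp] theorem A1lift_Sq2 : A1lift s t hs hst htop Sq2 = t := by
  simp [A1lift, Sq2]

end Lift

/-- The augmentation of `A1`, killing both generators. -/
def A1aug : A1 →ₐ[ZMod 2] ZMod 2 := A1lift 0 0 (by simp) (by simp) (by simp)

/-- The action of `A1` on `A(1)/(Sq¹)`, in the basis `1, Sq², Sq¹Sq², Sq²Sq¹Sq²`. -/
def A1rep : A1 →ₐ[ZMod 2] Matrix (Fin 4) (Fin 4) (ZMod 2) :=
  A1lift !![0, 0, 0, 0; 0, 0, 0, 0; 0, 1, 0, 0; 0, 0, 0, 0]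
    !![0, 0, 0, 0; 1, 0, 0, 0; 0, 0, 0, 0; 0, 0, 1, 0] (by decide) (by decide) (by decide)

theorem A1aug_eq_zero_of_mem {x : A1} (hx : x ∈ Submodule.span A1 {Sq1, Sq2}) :
    A1aug x = 0 := by
  obtain ⟨a, b, rfl⟩ := Submodule.mem_span_pair.1 hx
  simp [A1aug]

theorem sub_A1aug_mem (x : A1) :
    x - algebraMap (ZMod 2) A1 (A1aug x) ∈ Submodule.span A1 {Sq1, Sq2} := by
  induction x using A1_induction with
  | hc c => simp
  | h1 => simpa [A1aug] using Submodule.subset_span (by simp)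
  | h2 => simpa [A1aug] using Submodule.subset_span (by simp)
  | hmul x y hx hy =>
    convert add_mem (Submodule.smul_mem _ x hy)
      (Submodule.smul_mem _ (algebraMap (ZMod 2) A1 (A1aug y)) hx) using 1
    rw [smul_eq_mul, smul_eq_mul, map_mul, map_mul, mul_sub, mul_sub,
      Algebra.commutes (A1aug y) x, Algebra.commutes (A1aug y) (algebraMap _ _ (A1aug x))]
    abel
  | hadd x y hx hy =>
    convert add_mem hx hy using 1
    rw [map_add, map_add]
    abel

theorem A1word_mem {l : List (Fin 2)} (hl : l ≠ []) :
    A1word l ∈ Submodule.span A1 {Sq1, Sq2} := by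
  obtain ⟨l, i, rfl⟩ := l.eq_nil_or_concat'.resolve_left hl
  have hi : A1gen i ∈ Submodule.span A1 {Sq1, Sq2} := by
    apply Submodule.subset_span
    fin_cases i <;> simp [A1gen]
  simpa [A1word] using Submodule.smul_mem _ (l.map A1gen).prod hi

theorem A1qdeg_eq_bot {n : ℕ} (hn : n ≠ 0) :
    A1qdeg (Submodule.span A1 {Sq1, Sq2}) n = ⊥ := by
  rw [A1qdeg, A1deg, Submodule.map_span, Submodule.span_eq_bot]
  rintro _ ⟨_, ⟨l, hl, rfl⟩, rfl⟩
  refine (Submodule.Quotient.mk_eq_zero _).2 (A1word_mem ?_)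
  rintro rfl
  exact hn (by simpa [A1wt] using hl.symm)

theorem finrank_trivial : Module.finrank (ZMod 2) (A1 ⧸ Submodule.span A1 {Sq1, Sq2}) = 1 := by
  refine finrank_eq_one (Submodule.Quotient.mk 1) (fun h => ?_) fun w => ?_
  · simpa using A1aug_eq_zero_of_mem ((Submodule.Quotient.mk_eq_zero _).1 h)
  · obtain ⟨x, rfl⟩ := Submodule.Quotient.mk_surjective _ w
    refine ⟨A1aug x, ?_⟩
    rw [← Submodule.Quotient.mk_smul, ← Algebra.algebraMap_eq_smul_one]
    exact ((Submodule.Quotient.eq _).2 (sub_A1aug_mem x)).symm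

/-- The classes of `1, Sq¹, Sq²Sq¹` span `A(1)/(Sq²)`. -/
theorem exists_normal_form (x : A1) : ∃ a b c : ZMod 2,
    x - (a • 1 + b • Sq1 + c • (Sq2 * Sq1)) ∈ Submodule.span A1 {Sq2} := by
  let S : Submodule (ZMod 2) A1 :=
    Submodule.span (ZMod 2) {1, Sq1, Sq2 * Sq1} ⊔
      (Submodule.span A1 {Sq2}).restrictScalars (ZMod 2)
  have hJ {y : A1} (hy : y ∈ Submodule.span A1 {Sq2}) : y ∈ S := Submodule.mem_sup_right hy
  have hG {y : A1} (hy : y ∈ ({1, Sq1, Sq2 * Sq1} : Set A1)) : y ∈ S :=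
    Submodule.mem_sup_left (Submodule.subset_span hy)
  have stable (z : A1) (h1 : z * 1 ∈ S) (h2 : z * Sq1 ∈ S) (h3 : z * (Sq2 * Sq1) ∈ S) :
      ∀ y ∈ S, z * y ∈ S := by
    suffices S ≤ S.comap (LinearMap.mulLeft (ZMod 2) z) from fun y hy => this hy
    refine sup_le (Submodule.span_le.2 ?_) fun y hy => hJ (Submodule.smul_mem _ z hy)
    rintro _ (rfl | rfl | rfl)
    exacts [h1, h2, h3]
  have hS (x : A1) : ∀ y ∈ S, x * y ∈ S := by
    induction x using A1_induction with
    | hc c =>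
      intro y hy
      rw [← Algebra.smul_def]
      exact S.smul_mem c hy
    | h1 =>
      refine stable _ (hG (by simp)) ?_ ?_
      · rw [Sq1_mul_Sq1]
        exact S.zero_mem
      · rw [← mul_assoc, ← Sq2_mul_Sq2]
        exact hJ (Submodule.smul_mem _ Sq2 (Submodule.mem_span_singleton_self _))
    | h2 =>
      refine stable _ ?_ (hG (by simp)) ?_
      · rw [mul_one]
        exact hJ (Submodule.mem_span_singleton_self _)
      · rw [← mul_assoc, Sq2_mul_Sq2, mul_assoc, Sq1_mul_Sq1, mul_zero]
        exact S.zero_mem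
    | hmul x y hx hy =>
      intro z hz
      rw [mul_assoc]
      exact hx _ (hy _ hz)
    | hadd x y hx hy =>
      intro z hz
      rw [add_mul]
      exact add_mem (hx _ hz) (hy _ hz)
  have hx : x ∈ S := by simpa using hS x 1 (hG (by simp))
  obtain ⟨u, hu, v, hv, rfl⟩ := Submodule.mem_sup.1 hx
  obtain ⟨a, b, c, rfl⟩ := Submodule.mem_span_triple.1 hu
  exact ⟨a, b, c, by simpa using hv⟩

theorem A1rep_zero_col_of_mem {x : A1} (hx : x ∈ Submodule.span A1 {Sq1}) (i : Fin 4) :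
    A1rep x i 0 = 0 := by
  obtain ⟨a, rfl⟩ := Submodule.mem_span_singleton.1 hx
  fin_cases i <;> simp [A1rep, Matrix.mul_apply, Fin.sum_univ_four]

theorem mul_Sq2_mem_of_mem {x : A1} (hx : x ∈ Submodule.span A1 {Sq2}) :
    x * Sq2 ∈ Submodule.span A1 {Sq1} := by
  obtain ⟨a, rfl⟩ := Submodule.mem_span_singleton.1 hx
  rw [smul_eq_mul, mul_assoc, Sq2_mul_Sq2, ← mul_assoc]
  exact Submodule.smul_mem _ _ (Submodule.mem_span_singleton_self _)

theorem mem_of_mul_Sq2_mem {x : A1} (hx : x * Sq2 ∈ Submodule.span A1 {Sq1}) :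
    x ∈ Submodule.span A1 {Sq2} := by
  obtain ⟨a, b, c, h⟩ := exists_normal_form x
  have key := A1rep_zero_col_of_mem (sub_mem hx (mul_Sq2_mem_of_mem h))
  rw [← sub_mul, sub_sub_cancel] at key
  have ha : a = 0 := by
    simpa [A1rep, Matrix.mul_apply, Fin.sum_univ_four] using key 1
  have hb : b = 0 := by
    simpa [A1rep, Matrix.mul_apply, Fin.sum_univ_four] using key 2
  have hc : c = 0 := by
    simpa [A1rep, Matrix.mul_apply, Fin.sum_univ_four] using key 3
  simpa [ha, hb, hc] using h

theorem mul_Sq2_mem_A1deg {n : ℕ} {y : A1} (hy : y ∈ A1deg n) : y * Sq2 ∈ A1deg (n + 2) := by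
  suffices A1deg n ≤ (A1deg (n + 2)).comap (LinearMap.mulRight (ZMod 2) Sq2) from this hy
  refine Submodule.span_le.2 ?_
  rintro _ ⟨l, rfl, rfl⟩
  exact Submodule.subset_span ⟨l ++ [1], by simp [A1wt], by simp [A1word, A1gen]⟩

/-- The short exact sequence of graded left A(1)-modules
`0 → Σ² A(1)/(Sq²) → A(1)/(Sq¹) → F₂ → 0`, where F₂ = A(1)/(Sq¹,Sq²) is the trivial
module concentrated in degree 0, the surjection sends the generator to 1 (the canonical
projection), and the injection sends the generator to the class of Sq² (raising
degrees by 2). -/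
theorem ses_ko_HZ :
    (Module.finrank (ZMod 2) (A1 ⧸ (Submodule.span A1 {Sq1, Sq2})) = 1 ∧
      ∀ n : ℕ, n ≠ 0 → A1qdeg (Submodule.span A1 {Sq1, Sq2}) n = ⊥) ∧
    ∃ f : (A1 ⧸ (Submodule.span A1 {Sq2})) →ₗ[A1] (A1 ⧸ (Submodule.span A1 {Sq1})),
    ∃ g : (A1 ⧸ (Submodule.span A1 {Sq1})) →ₗ[A1] (A1 ⧸ (Submodule.span A1 {Sq1, Sq2})),
      f ((Submodule.span A1 {Sq2}).mkQ 1) = (Submodule.span A1 {Sq1}).mkQ Sq2 ∧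
      (∀ x : A1, g ((Submodule.span A1 {Sq1}).mkQ x) = (Submodule.span A1 {Sq1, Sq2}).mkQ x) ∧
      Function.Injective f ∧ Function.Surjective g ∧
      LinearMap.range f = LinearMap.ker g ∧
      (∀ n : ℕ, ∀ x ∈ A1qdeg (Submodule.span A1 {Sq2}) n,
        f x ∈ A1qdeg (Submodule.span A1 {Sq1}) (n + 2)) := by
  refine ⟨⟨finrank_trivial, fun n hn => A1qdeg_eq_bot hn⟩, ?_⟩
  let φ : A1 →ₗ[A1] A1 ⧸ Submodule.span A1 {Sq1} :=
    (Submodule.span A1 {Sq1}).mkQ ∘ₗ LinearMap.toSpanSingleton A1 A1 Sq2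
  have hφ (x : A1) : φ x = 0 ↔ x * Sq2 ∈ Submodule.span A1 {Sq1} :=
    Submodule.Quotient.mk_eq_zero _
  have hker : Submodule.span A1 {Sq2} ≤ LinearMap.ker φ := fun x hx =>
    (hφ x).2 (mul_Sq2_mem_of_mem hx)
  have hle : Submodule.span A1 {Sq1} ≤ Submodule.span A1 {Sq1, Sq2} :=
    Submodule.span_mono (by simp)
  refine ⟨Submodule.liftQ _ φ hker, Submodule.factor hle, ?_, fun x => rfl, ?_, ?_, ?_, ?_⟩
  · simp [φ]
  · rw [← LinearMap.ker_eq_bot]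
    exact Submodule.ker_liftQ_eq_bot _ _ _ fun x hx => mem_of_mul_Sq2_mem ((hφ x).1 hx)
  · exact Submodule.factor_surjective hle
  · rw [Submodule.range_liftQ]
    ext w
    obtain ⟨x, rfl⟩ := Submodule.Quotient.mk_surjective _ w
    refine Iff.trans ?_ (Submodule.Quotient.mk_eq_zero (Submodule.span A1 {Sq1, Sq2})).symm
    rw [Submodule.mem_span_pair]
    constructor
    · rintro ⟨b, hb⟩
      obtain ⟨a, ha⟩ := Submodule.mem_span_singleton.1 ((Submodule.Quotient.eq _).1 hb.symm)
      exact ⟨a, b, by rw [ha]; exact sub_add_cancel x _⟩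
    · rintro ⟨a, b, rfl⟩
      refine ⟨b, ((Submodule.Quotient.eq _).2 ?_).symm⟩
      exact Submodule.mem_span_singleton.2 ⟨a, (add_sub_cancel_right _ _).symm⟩
  · rintro n _ ⟨y, hy, rfl⟩
    exact ⟨y * Sq2, mul_Sq2_mem_A1deg hy, rfl⟩

end
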